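/- arXiv:2511.12157 — 2 statements merged into one kernel-verified Lean document; each statement's English description precedes it below -/
import Mathlib

section
/- Under the oracle setting, assume F := G_y(A·) satisfies the BRSC property with respect to Ψ, a compact convex set X containing both x^or and x*, and K ≥ 2k*, with constant C_K > 0; assume the concavity condition (CC) holds; and let L̃ > 0 satisfy ‖∇G_y(w)‖₂ ≤ √(2L̃·G_y(w)) for all w ∈ {Ax : x ∈ C^N}. Let S ⊆ C^{k*} contain u^or, let Ω := ∪_{j=1}^{k*} {u ∈ C^{k*} : u_j ∈ [−α_{σ*[j]}, α_{σ*[j]}]} and Ω̃ := ∪_{j=1}^{k*} {u ∈ C^{k*} : ψ'_{σ*[j]}(u_j) ∈ [−ρ_j, ρ_j]} with ρ_j := (ψ'_{σ*[j]}(α_{σ*[j]}) − ψ'_{σ*[j]}(0))/C_K + ψ'_{σ*[j]}(0). Suppose either (a) C_K > 1, S ∩ Ω = ∅, and ‖a_i‖₂√(2L̃·F(x*)) ≤ ψ_i'(α_i) − ψ_i'(0) for all i ∉ σ*, or (b) C_K ≤ 1, S ∩ Ω̃ = ∅, and ‖a_i‖₂√(2L̃·F(x*)) < C_K(ψ_i'(α_i)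 − ψ_i'(0)) for all i ∉ σ*; and in addition λ₀ > F(x*)/(1 + K − 2k*). Then x^or is the unique global minimizer of J_Ψ (and of J₀) with support of x^or equal to σ*, and every critical point x' of J_Ψ with x' ≠ x^or satisfies ‖x' − x^or‖₀ > K. -/
open Classical

noncomputable section

/-- `‖x‖₀`: the number of nonzero entries of a vector. -/
def norm0 {ι : Type*} [Fintype ι] (x : ι → ℝ) : ℕ :=
  (Finset.univ.filter fun i => x i ≠ 0).card

/-- Euclidean inner product on `ι → ℝ`. -/
def dotp {ι : Type*} [Fintype ι] (x y : ι → ℝ) : ℝ := ∑ i, x i * y i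

/-- squared Euclidean norm. -/
def sqnorm {ι : Type*} [Fintype ι] (x : ι → ℝ) : ℝ := ∑ i, (x i) ^ 2

/-- Euclidean norm. -/
def enorm2 {ι : Type*} [Fintype ι] (x : ι → ℝ) : ℝ := Real.sqrt (sqnorm x)


/-- one-dimensional Bregman divergence `d_ψ(x, x') = ψ(x) - ψ(x') - ψ'(x')(x - x')`,
with the derivative `dψ` of `ψ` given as data. -/
def dBreg (ψ dψ : ℝ → ℝ) (x x' : ℝ) : ℝ := ψ x - ψ x' - dψ x' * (x - x')

/-- The data-fidelity setting of the paper (Assumption 1.3): a separable fidelity term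
`G_y(w) = Σ_j g_j(w_j)` where each `g j` is nonnegative, strictly convex, twice
differentiable on the interior of its domain, with an `L`-Lipschitz derivative `dg j`;
a matrix `A`; and the constraint set `𝒞` equal to `ℝ` or `ℝ_{≥0}`. -/
structure FidSetting (M N : ℕ) where
  𝒞 : Set ℝ
  h𝒞 : 𝒞 = Set.univ ∨ 𝒞 = Set.Ici 0
  A : Matrix (Fin M) (Fin N) ℝ
  domg : Fin M → Set ℝ
  g : Fin M → ℝ → ℝ
  dg : Fin M → ℝ → ℝ
  L : ℝ
  hL : 0 < L
  hdom : ∀ x : Fin N → ℝ, (∀ i, x i ∈ 𝒞) → ∀ j, (A.mulVec x) j ∈ interior (domg j)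
  hg_nonneg : ∀ j, ∀ w ∈ domg j, 0 ≤ g j w
  hg_sconv : ∀ j, StrictConvexOn ℝ (domg j) (g j)
  hg_deriv : ∀ j, ∀ w ∈ interior (domg j), HasDerivAt (g j) (dg j w) w
  hg_deriv2 : ∀ j, ∀ w ∈ interior (domg j), DifferentiableAt ℝ (dg j) w
  hg_lip : ∀ j, ∀ w ∈ domg j, ∀ v ∈ domg j, |dg j w - dg j v| ≤ L * |w - v|

/-- the feasible set `𝒞^N`. -/
def FidSetting.feas {M N : ℕ} (S : FidSetting M N) : Set (Fin N → ℝ) :=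
  {x | ∀ i, x i ∈ S.𝒞}

/-- the data term `F(x) = G_y(Ax)`. -/
def FidSetting.F {M N : ℕ} (S : FidSetting M N) (x : Fin N → ℝ) : ℝ :=
  ∑ j, S.g j (S.A.mulVec x j)

/-- the gradient `∇F(x) = Aᵀ ∇G_y(Ax)`. -/
def FidSetting.gradF {M N : ℕ} (S : FidSetting M N) (x : Fin N → ℝ) : Fin N → ℝ :=
  fun i => ∑ j, S.A j i * S.dg j (S.A.mulVec x j)

/-- the Bregman-generating setting (Definition 3.1 of the paper): `Ψ(x) = Σ_i ψ_i(x_i)`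
with each `ψ_i` strictly convex, twice differentiable, `t ↦ ψ_i'(t)t - ψ_i(t)` coercive,
and `ψ_i'` odd when `𝒞 = ℝ` (resp. `ψ_i'(0) ≥ 0` when `𝒞 = ℝ_{≥0}`). -/
structure PsiSetting (N : ℕ) (𝒞 : Set ℝ) where
  ψ : Fin N → ℝ → ℝ
  dψ : Fin N → ℝ → ℝ
  hconv : ∀ i, StrictConvexOn ℝ 𝒞 (ψ i)
  hderiv : ∀ i, ∀ t ∈ 𝒞, HasDerivWithinAt (ψ i) (dψ i t) 𝒞 t
  hderiv2 : ∀ i, ∀ t ∈ interior 𝒞, DifferentiableAt ℝ (dψ i) t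
  hcoer : ∀ i, ∀ c : ℝ, ∃ R : ℝ, ∀ t ∈ 𝒞, R ≤ |t| → c ≤ dψ i t * t - ψ i t
  hodd : 𝒞 = Set.univ → ∀ i t, dψ i (-t) = -(dψ i t)
  hnn : 𝒞 = Set.Ici 0 → ∀ i, 0 ≤ dψ i 0

/-- `∇Ψ(x)`. -/
def PsiSetting.gradPsi {N : ℕ} {𝒞 : Set ℝ} (P : PsiSetting N 𝒞) (x : Fin N → ℝ) :
    Fin N → ℝ :=
  fun i => P.dψ i (x i)

/-- the scalar B-rex penalty `β_{ψ_i}`. -/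
def betaPen {N : ℕ} {𝒞 : Set ℝ} (P : PsiSetting N 𝒞) (α : Fin N → ℝ) (lam0 : ℝ)
    (i : Fin N) (t : ℝ) : ℝ :=
  if |t| ≤ α i then P.ψ i 0 - P.ψ i t + Real.sign t * P.dψ i (α i) * t else lam0

/-- the relaxed objective `J_Ψ(x) = G_y(Ax) + B_Ψ(x)`. -/
def JPsi {M N : ℕ} (S : FidSetting M N) (P : PsiSetting N S.𝒞) (α : Fin N → ℝ) (lam0 : ℝ)
    (x : Fin N → ℝ) : ℝ :=
  S.F x + ∑ i, betaPen P α lam0 i (x i)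

/-- the `ℓ₀`-regularized objective `J₀(x) = G_y(Ax) + λ₀‖x‖₀`. -/
def J0 {M N : ℕ} (S : FidSetting M N) (lam0 : ℝ) (x : Fin N → ℝ) : ℝ :=
  S.F x + lam0 * (norm0 x : ℝ)

/-- the subdifferential `∂h_i` of `h_i = β_{ψ_i} + ψ_i` (closed form). -/
def subdiffH (𝒞 : Set ℝ) (dψ : ℝ → ℝ) (α : ℝ) (t : ℝ) : Set ℝ :=
  if 𝒞 = Set.univ then
    if t = 0 then Set.Icc (-(dψ α)) (dψ α)
    else if |t| ≤ α then {Real.sign t * dψ α}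
    else {dψ t}
  else
    if t ≤ α then {dψ α} else {dψ t}

/-- `z(x) = ∇Ψ(x) - Aᵀ∇G_y(Ax)`. -/
def zmap {M N : ℕ} (S : FidSetting M N) (P : PsiSetting N S.𝒞) (x : Fin N → ℝ) :
    Fin N → ℝ :=
  fun i => P.dψ i (x i) - S.gradF x i

/-- `x ∈ 𝒞^N` is a critical point of `J_Ψ` iff `z_i(x) ∈ ∂h_i(x_i)` for every `i`. -/
def IsCritical {M N : ℕ} (S : FidSetting M N) (P : PsiSetting N S.𝒞) (α : Fin N → ℝ)
    (x : Fin N → ℝ) : Prop :=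
  x ∈ S.feas ∧ ∀ i, zmap S P x i ∈ subdiffH S.𝒞 (P.dψ i) (α i) (x i)

/-- `F = G_y(A·)` satisfies BRSC with respect to `Ψ`, `X`, `K`, with constant `CK`. -/
def BRSCholds {M N : ℕ} (S : FidSetting M N) (P : PsiSetting N S.𝒞)
    (X : Set (Fin N → ℝ)) (K : ℕ) (CK : ℝ) : Prop :=
  ∀ x ∈ X, ∀ x' ∈ S.feas, x ≠ x' → norm0 (x - x') ≤ K →
    CK * dotp (P.gradPsi x - P.gradPsi x') (x - x')
      ≤ dotp (S.gradF x - S.gradF x') (x - x')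

/-- the concavity condition (CC). -/
def CCond {M N : ℕ} (S : FidSetting M N) (P : PsiSetting N S.𝒞) (α : Fin N → ℝ)
    (lam0 : ℝ) : Prop :=
  ∀ x ∈ S.feas, ∀ i : Fin N,
    StrictConcaveOn ℝ (Set.Ioo (-(α i)) 0) (fun t => JPsi S P α lam0 (Function.update x i t)) ∧
    StrictConcaveOn ℝ (Set.Ioo 0 (α i)) (fun t => JPsi S P α lam0 (Function.update x i t))

/-- the support of a vector, as a `Finset`. -/
def suppF {N : ℕ} (x : Fin N → ℝ) : Finset (Fin N) := Finset.univ.filter fun i => x i ≠ 0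

/-- zero padding operator: entries indexed by `σ` equal those of `u`, others are `0`. -/
def zpad {N : ℕ} (σ : Finset (Fin N)) (u : {i // i ∈ σ} → ℝ) : Fin N → ℝ :=
  fun i => if h : i ∈ σ then u ⟨i, h⟩ else 0

/-- the restricted data term `F_σ(u) = G_y(A_σ u)`. -/
def Fres {M N : ℕ} (S : FidSetting M N) (σ : Finset (Fin N)) (u : {i // i ∈ σ} → ℝ) : ℝ :=
  S.F (zpad σ u)


lemma aux_grad {N : ℕ} {C : Set ℝ} (P : PsiSetting N C) (i : Fin N) {s t : ℝ}
    (hs : s ∈ C) (ht : t ∈ C) (hne : s ≠ t) :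
    P.ψ i t + P.dψ i t * (s - t) < P.ψ i s := by
  rcases lt_or_gt_of_ne hne with h | h
  · have := (P.hconv i).slope_lt_of_hasDerivWithinAt hs ht h (P.hderiv i t ht)
    rw [slope_def_field, div_lt_iff₀ (by linarith)] at this
    linarith
  · have := (P.hconv i).lt_slope_of_hasDerivWithinAt ht hs h (P.hderiv i t ht)
    rw [slope_def_field, lt_div_iff₀ (by linarith)] at this
    linarith

lemma aux_grad_le {N : ℕ} {C : Set ℝ} (P : PsiSetting N C) (i : Fin N) {s t : ℝ}
    (hs : s ∈ C) (ht : t ∈ C) :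
    P.ψ i t + P.dψ i t * (s - t) ≤ P.ψ i s := by
  by_cases h : s = t
  · subst h; simp
  · exact (aux_grad P i hs ht h).le

lemma aux_mono {N : ℕ} {C : Set ℝ} (P : PsiSetting N C) (i : Fin N) {s t : ℝ}
    (hs : s ∈ C) (ht : t ∈ C) (h : s < t) : P.dψ i s < P.dψ i t := by
  have h1 := aux_grad P i hs ht h.ne
  have h2 := aux_grad P i ht hs h.ne'
  by_contra hc
  push Not at hc
  nlinarith

lemma aux_mono_le {N : ℕ} {C : Set ℝ} (P : PsiSetting N C) (i : Fin N) {s t : ℝ}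
    (hs : s ∈ C) (ht : t ∈ C) (h : s ≤ t) : P.dψ i s ≤ P.dψ i t := by
  rcases h.eq_or_lt with h | h
  · subst h; exact le_rfl
  · exact (aux_mono P i hs ht h).le

lemma aux_even {N : ℕ} {C : Set ℝ} (hC : C = Set.univ) (P : PsiSetting N C) (i : Fin N)
    (t : ℝ) : P.ψ i (-t) = P.ψ i t := by
  have hd : ∀ s, HasDerivAt (P.ψ i) (P.dψ i s) s := by
    intro s
    have := P.hderiv i s (by simp [hC])
    exact this.hasDerivAt (by rw [hC]; exact Filter.univ_mem)
  have hd2 : ∀ s, HasDerivAt (fun s => P.ψ i (-s) - P.ψ i s) 0 s := by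
    intro s
    have h1 := (hd (-s)).scomp s (hasDerivAt_neg s)
    have h2 := h1.sub (hd s)
    rw [P.hodd hC i s] at h2
    have h3 : (-1 : ℝ) • -P.dψ i s - P.dψ i s = 0 := by simp
    rw [h3] at h2
    exact h2
  have := is_const_of_deriv_eq_zero (fun s => (hd2 s).differentiableAt) (fun s => (hd2 s).deriv) t 0
  simp at this
  linarith

lemma aux_nn {C : Set ℝ} (hC : C = Set.univ ∨ C = Set.Ici 0) {t : ℝ} (ht : 0 ≤ t) : t ∈ C := by
  rcases hC with h | h <;> simp [h, ht]

lemma aux_neg {C : Set ℝ} (hC : C = Set.univ ∨ C = Set.Ici 0) {t : ℝ} (h0 : t ∈ C) (ht : t < 0) :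
    C = Set.univ := by
  rcases hC with h | h
  · exact h
  · rw [h] at h0; simp at h0; linarith

lemma aux_d0 {N : ℕ} {C : Set ℝ} (hC : C = Set.univ) (P : PsiSetting N C) (i : Fin N) :
    P.dψ i 0 = 0 := by
  have := P.hodd hC i 0
  simp at this; linarith

lemma aux_d0_nn {N : ℕ} {C : Set ℝ} (hC : C = Set.univ ∨ C = Set.Ici 0)
    (P : PsiSetting N C) (i : Fin N) : 0 ≤ P.dψ i 0 := by
  rcases hC with h | h
  · exact (aux_d0 h P i).ge
  · exact P.hnn h i

lemma beta_pos {N : ℕ} {C : Set ℝ} (P : PsiSetting N C) (α : Fin N → ℝ) (l : ℝ) (i : Fin N)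
    {t : ℝ} (h0 : 0 ≤ t) (h1 : t ≤ α i) :
    betaPen P α l i t = P.ψ i 0 - P.ψ i t + P.dψ i (α i) * t := by
  unfold betaPen
  rw [abs_of_nonneg h0, if_pos h1]
  rcases h0.eq_or_lt with h | h
  · subst h; simp
  · rw [Real.sign_of_pos h]; ring

lemma beta_big {N : ℕ} {C : Set ℝ} (P : PsiSetting N C) (α : Fin N → ℝ) (l : ℝ) (i : Fin N)
    {t : ℝ} (h1 : α i < |t|) :
    betaPen P α l i t = l := by
  unfold betaPen
  rw [if_neg (not_le.mpr h1)]

lemma beta_neg {N : ℕ} {C : Set ℝ} (hC : C = Set.univ) (P : PsiSetting N C) (α : Fin N → ℝ)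
    (l : ℝ) (i : Fin N) (t : ℝ) :
    betaPen P α l i (-t) = betaPen P α l i t := by
  unfold betaPen
  rw [abs_neg, aux_even hC, Real.sign_neg]
  ring_nf

lemma off_pos {N : ℕ} {C : Set ℝ} (hC : C = Set.univ ∨ C = Set.Ici 0) (P : PsiSetting N C)
    (α : Fin N → ℝ) (l : ℝ) (i : Fin N) (hl : 0 < l)
    (hα : 0 < α i ∧ dBreg (P.ψ i) (P.dψ i) 0 (α i) = l) (CK g : ℝ)
    (H : (1 < CK ∧ |g| ≤ P.dψ i (α i) - P.dψ i 0) ∨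
      (CK ≤ 1 ∧ 0 < CK ∧ |g| < CK * (P.dψ i (α i) - P.dψ i 0)))
    {t : ℝ} (ht : 0 < t) :
    0 < g * t + CK * (P.ψ i t - P.ψ i 0 - P.dψ i 0 * t) + betaPen P α l i t := by
  obtain ⟨ha, hb⟩ := hα
  unfold dBreg at hb
  have m0 : (0:ℝ) ∈ C := aux_nn hC le_rfl
  have mt : t ∈ C := aux_nn hC ht.le
  have ma : α i ∈ C := aux_nn hC ha.le
  have g1 := aux_grad P i mt m0 ht.ne'
  have hga := neg_abs_le g
  rcases le_or_gt t (α i) with h | h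
  · rw [beta_pos P α l i ht.le h]
    have g2 := aux_grad P i m0 mt ht.ne
    have g3 := aux_mono_le P i mt ma h
    rcases H with ⟨h1, h2⟩ | ⟨h1, h3, h2⟩
    · nlinarith
    · have : 0 ≤ (1 - CK) * (P.dψ i (α i) * t - (P.ψ i t - P.ψ i 0)) :=
        mul_nonneg (by linarith) (by nlinarith)
      nlinarith
  · rw [beta_big P α l i (lt_of_lt_of_le h (le_abs_self t))]
    have g2 := aux_grad_le P i mt ma
    rcases H with ⟨h1, h2⟩ | ⟨h1, h3, h2⟩
    · have : 0 < (CK - 1) * (P.ψ i t - P.ψ i 0 - P.dψ i 0 * t) :=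
        mul_pos (by linarith) (by linarith)
      nlinarith
    · have e1 : 0 < (g + CK * (P.dψ i (α i) - P.dψ i 0)) * t := mul_pos (by linarith) ht
      have e2 : 0 ≤ CK * (P.ψ i t - (P.ψ i (α i) + P.dψ i (α i) * (t - α i))) :=
        mul_nonneg h3.le (by linarith)
      have e3 : 0 ≤ (1 - CK) * l := mul_nonneg (by linarith) hl.le
      rw [← hb] at e3 ⊢
      nlinarith

lemma off_all {N : ℕ} {C : Set ℝ} (hC : C = Set.univ ∨ C = Set.Ici 0) (P : PsiSetting N C)
    (α : Fin N → ℝ) (l : ℝ) (i : Fin N) (hl : 0 < l)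
    (hα : 0 < α i ∧ dBreg (P.ψ i) (P.dψ i) 0 (α i) = l) (CK g : ℝ)
    (H : (1 < CK ∧ |g| ≤ P.dψ i (α i) - P.dψ i 0) ∨
      (CK ≤ 1 ∧ 0 < CK ∧ |g| < CK * (P.dψ i (α i) - P.dψ i 0)))
    {t : ℝ} (mt : t ∈ C) (ht : t ≠ 0) :
    0 < g * t + CK * (P.ψ i t - P.ψ i 0 - P.dψ i 0 * t) + betaPen P α l i t := by
  rcases lt_or_gt_of_ne ht with h | h
  · have hu := aux_neg hC mt h
    have := off_pos hC P α l i hl hα CK (-g) (by simpa using H) (t := -t) (by linarith)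
    rw [aux_even hu, beta_neg hu, aux_d0 hu] at this
    rw [aux_d0 hu]
    linarith
  · exact off_pos hC P α l i hl hα CK g H h

/-- positive `v` version on the support -/
lemma on_pos {N : ℕ} {C : Set ℝ} (hC : C = Set.univ ∨ C = Set.Ici 0) (P : PsiSetting N C)
    (α : Fin N → ℝ) (l : ℝ) (i : Fin N)
    (hα : 0 < α i ∧ dBreg (P.ψ i) (P.dψ i) 0 (α i) = l) (CK v : ℝ) (hCK : 0 < CK)
    (hv : α i < v)
    (H : 1 < CK ∨ (CK ≤ 1 ∧ P.dψ i (α i) - P.dψ i 0 + CK * P.dψ i 0 < CK * P.dψ i v))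
    {t : ℝ} (mt : t ∈ C) (ht : t ≠ v) :
    l < CK * (P.ψ i t - P.ψ i v - P.dψ i v * (t - v)) + betaPen P α l i t := by
  have key : ∀ t : ℝ, 0 ≤ t → t ≤ α i →
      l < CK * (P.ψ i t - P.ψ i v - P.dψ i v * (t - v)) + betaPen P α l i t := by
    intro t h0 h1
    rw [beta_pos P α l i h0 h1]
    obtain ⟨ha, hb⟩ := hα
    unfold dBreg at hb
    have m0 : (0:ℝ) ∈ C := aux_nn hC le_rfl
    have mt : t ∈ C := aux_nn hC h0
    have ma : α i ∈ C := aux_nn hC ha.le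
    have mv : v ∈ C := aux_nn hC (ha.trans hv).le
    have g1 := aux_grad P i ma mv hv.ne
    have g2 := aux_grad_le P i mt ma
    have g3 := aux_grad_le P i ma mt
    have g4 := aux_mono P i ma mv hv
    have g5 := aux_mono_le P i m0 mt h0
    have e1 : 0 < CK * (P.ψ i (α i) - (P.ψ i v + P.dψ i v * (α i - v))) :=
      mul_pos hCK (by linarith)
    rcases H with h | ⟨h, h'⟩
    · have e2 : 0 ≤ (CK - 1) * (P.ψ i t - (P.ψ i (α i) + P.dψ i (α i) * (t - α i))) :=
        mul_nonneg (by linarith) (by linarith)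
      have e3 : 0 ≤ (P.dψ i v - P.dψ i (α i)) * (α i - t) :=
        mul_nonneg (by linarith) (by linarith)
      have e4 := mul_nonneg hCK.le e3
      nlinarith
    · have e2 : 0 ≤ (1 - CK) * (P.ψ i (α i) - (P.ψ i t + P.dψ i t * (α i - t))) :=
        mul_nonneg (by linarith) (by linarith)
      have e3 : 0 ≤ (P.dψ i t - P.dψ i 0) * (α i - t) :=
        mul_nonneg (by linarith) (by linarith)
      have e4 : 0 ≤ (1 - CK) * ((P.dψ i t - P.dψ i 0) * (α i - t)) :=
        mul_nonneg (by linarith) e3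
      have e5 : 0 ≤ (CK * P.dψ i v - (P.dψ i (α i) - P.dψ i 0 + CK * P.dψ i 0)) * (α i - t) :=
        mul_nonneg (by linarith) (by linarith)
      nlinarith
  have mv : v ∈ C := aux_nn hC (hα.1.trans hv).le
  rcases lt_or_ge (α i) |t| with h | h
  · rw [beta_big P α l i h]
    have := aux_grad P i mt mv ht
    have : 0 < CK * (P.ψ i t - P.ψ i v - P.dψ i v * (t - v)) := mul_pos hCK (by linarith)
    linarith
  · rcases le_or_gt 0 t with h0 | h0
    · exact key t h0 ((le_abs_self t).trans h)
    · have hu := aux_neg hC mt h0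
      have := key (-t) (by linarith) ((neg_le_abs t).trans h)
      rw [aux_even hu, beta_neg hu] at this
      have hdv : 0 < P.dψ i v := by
        have := aux_mono P i (aux_nn hC le_rfl) mv (hα.1.trans hv)
        rwa [aux_d0 hu] at this
      have : 0 < CK * (P.dψ i v * (-t)) := mul_pos hCK (mul_pos hdv (by linarith))
      nlinarith

lemma on_reduce {N : ℕ} {C : Set ℝ} (hC : C = Set.univ ∨ C = Set.Ici 0) (P : PsiSetting N C)
    (α : Fin N → ℝ) (i : Fin N) (ha : 0 < α i) (CK v : ℝ) (hCK : 0 < CK)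
    (H : (1 < CK ∧ v ∉ Set.Icc (-(α i)) (α i)) ∨ (CK ≤ 1 ∧ P.dψ i v ∉
      Set.Icc (-((P.dψ i (α i) - P.dψ i 0) / CK + P.dψ i 0))
        ((P.dψ i (α i) - P.dψ i 0) / CK + P.dψ i 0))) (hv : 0 ≤ v) :
    α i < v ∧ (1 < CK ∨ (CK ≤ 1 ∧ P.dψ i (α i) - P.dψ i 0 + CK * P.dψ i 0 < CK * P.dψ i v)) := by
  have m0 : (0:ℝ) ∈ C := aux_nn hC le_rfl
  have mv : v ∈ C := aux_nn hC hv
  have ma : α i ∈ C := aux_nn hC ha.le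
  rcases H with ⟨h1, h2⟩ | ⟨h1, h2⟩
  · refine ⟨?_, Or.inl h1⟩
    by_contra hc
    exact h2 ⟨by linarith, by linarith⟩
  · have hd0 := aux_d0_nn hC P i
    have hdv := aux_mono_le P i m0 mv hv
    have hda := aux_mono P i m0 ma ha
    set D := (P.dψ i (α i) - P.dψ i 0) / CK with hD
    have hD0 : P.dψ i (α i) - P.dψ i 0 = CK * D := by rw [hD]; field_simp
    have hDp : 0 < D := by rw [hD]; apply div_pos <;> linarith
    have hlt : D + P.dψ i 0 < P.dψ i v := by
      by_contra hc
      exact h2 ⟨by linarith, by linarith⟩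
    refine ⟨?_, Or.inr ⟨h1, ?_⟩⟩
    · by_contra hc
      have := aux_mono_le P i mv ma (not_lt.mp hc)
      nlinarith
    · nlinarith

lemma H_neg {N : ℕ} {C : Set ℝ} (hu : C = Set.univ) (P : PsiSetting N C)
    (α : Fin N → ℝ) (i : Fin N) (CK v : ℝ)
    (H : (1 < CK ∧ v ∉ Set.Icc (-(α i)) (α i)) ∨ (CK ≤ 1 ∧ P.dψ i v ∉
      Set.Icc (-((P.dψ i (α i) - P.dψ i 0) / CK + P.dψ i 0))
        ((P.dψ i (α i) - P.dψ i 0) / CK + P.dψ i 0))) :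
    (1 < CK ∧ -v ∉ Set.Icc (-(α i)) (α i)) ∨ (CK ≤ 1 ∧ P.dψ i (-v) ∉
      Set.Icc (-((P.dψ i (α i) - P.dψ i 0) / CK + P.dψ i 0))
        ((P.dψ i (α i) - P.dψ i 0) / CK + P.dψ i 0)) := by
  rw [P.hodd hu]
  rcases H with ⟨h1, h2⟩ | ⟨h1, h2⟩
  · left; refine ⟨h1, fun h => h2 ⟨by linarith [h.2], by linarith [h.1]⟩⟩
  · right; refine ⟨h1, fun h => h2 ⟨by linarith [h.2], by linarith [h.1]⟩⟩

lemma on_all {N : ℕ} {C : Set ℝ} (hC : C = Set.univ ∨ C = Set.Ici 0) (P : PsiSetting N C)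
    (α : Fin N → ℝ) (l : ℝ) (i : Fin N)
    (hα : 0 < α i ∧ dBreg (P.ψ i) (P.dψ i) 0 (α i) = l) (CK v : ℝ) (hCK : 0 < CK)
    (mv : v ∈ C)
    (H : (1 < CK ∧ v ∉ Set.Icc (-(α i)) (α i)) ∨ (CK ≤ 1 ∧ P.dψ i v ∉
      Set.Icc (-((P.dψ i (α i) - P.dψ i 0) / CK + P.dψ i 0))
        ((P.dψ i (α i) - P.dψ i 0) / CK + P.dψ i 0)))
    {t : ℝ} (mt : t ∈ C) (ht : t ≠ v) :
    l < CK * (P.ψ i t - P.ψ i v - P.dψ i v * (t - v)) + betaPen P α l i t := by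
  rcases le_or_gt 0 v with h | h
  · obtain ⟨h1, h2⟩ := on_reduce hC P α i hα.1 CK v hCK H h
    exact on_pos hC P α l i hα CK v hCK h1 h2 mt ht
  · have hu := aux_neg hC mv h
    obtain ⟨h1, h2⟩ := on_reduce hC P α i hα.1 CK (-v) hCK (H_neg hu P α i CK v H) (by linarith)
    have := on_pos hC P α l i hα CK (-v) hCK h1 h2 (t := -t) (by simp [hu])
      (fun h => ht (by linarith))
    rw [aux_even hu, aux_even hu, beta_neg hu, P.hodd hu] at this
    nlinarith

lemma on_abs {N : ℕ} {C : Set ℝ} (hC : C = Set.univ ∨ C = Set.Ici 0) (P : PsiSetting N C)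
    (α : Fin N → ℝ) (i : Fin N) (ha : 0 < α i) (CK v : ℝ) (hCK : 0 < CK)
    (mv : v ∈ C)
    (H : (1 < CK ∧ v ∉ Set.Icc (-(α i)) (α i)) ∨ (CK ≤ 1 ∧ P.dψ i v ∉
      Set.Icc (-((P.dψ i (α i) - P.dψ i 0) / CK + P.dψ i 0))
        ((P.dψ i (α i) - P.dψ i 0) / CK + P.dψ i 0))) : α i < |v| := by
  rcases le_or_gt 0 v with h | h
  · exact (on_reduce hC P α i ha CK v hCK H h).1.trans_le (le_abs_self v)
  · have hu := aux_neg hC mv h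
    exact (on_reduce hC P α i ha CK (-v) hCK (H_neg hu P α i CK v H) (by linarith)).1.trans_le
      (neg_le_abs v)

lemma sub_neg_mem {C : Set ℝ} (hu : C = Set.univ) {d : ℝ → ℝ} (hodd : ∀ t, d (-t) = - d t)
    {a t z : ℝ} (h : z ∈ subdiffH C d a t) : -z ∈ subdiffH C d a (-t) := by
  unfold subdiffH at *
  rw [if_pos hu] at *
  simp only [neg_eq_zero, abs_neg]
  split_ifs at * with h1 h2
  · exact ⟨by linarith [h.2], by linarith [h.1]⟩
  · rw [Real.sign_neg]; simp at *; linarith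
  · simp at *; rw [hodd, h]

lemma sub_pos_mem {C : Set ℝ} {d : ℝ → ℝ} {a t z : ℝ} (ht : 0 < t) (h : z ∈ subdiffH C d a t) :
    (t ≤ a ∧ z = d a) ∨ (a < t ∧ z = d t) := by
  unfold subdiffH at *
  rw [if_neg ht.ne', abs_of_pos ht, Real.sign_of_pos ht] at h
  rcases le_or_gt t a with h1 | h1
  · left; simpa [h1] using h
  · right; simpa [h1, h1.not_ge] using h

lemma sub_zero_mem {C : Set ℝ} {d : ℝ → ℝ} {a z : ℝ} (ha : 0 < a) (h : z ∈ subdiffH C d a 0) :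
    z ≤ d a := by
  unfold subdiffH at *
  by_cases hu : C = Set.univ
  · rw [if_pos hu, if_pos rfl] at h
    exact h.2
  · rw [if_neg hu, if_pos ha.le] at h
    exact (Set.mem_singleton_iff.mp h).le

lemma offc_all {N : ℕ} {C : Set ℝ} (hC : C = Set.univ ∨ C = Set.Ici 0) (P : PsiSetting N C)
    (α : Fin N → ℝ) (i : Fin N) (ha : 0 < α i) (CK g : ℝ)
    (H : (1 < CK ∧ |g| ≤ P.dψ i (α i) - P.dψ i 0) ∨
      (CK ≤ 1 ∧ 0 < CK ∧ |g| < CK * (P.dψ i (α i) - P.dψ i 0)))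
    {t z : ℝ} (mt : t ∈ C) (ht : t ≠ 0) (hz : z ∈ subdiffH C (P.dψ i) (α i) t) :
    (P.dψ i t - z - g - CK * (P.dψ i t - P.dψ i 0)) * t < 0 := by
  have m0 : (0:ℝ) ∈ C := aux_nn hC le_rfl
  have ma : α i ∈ C := aux_nn hC ha.le
  have key : ∀ g t z : ℝ, ((1 < CK ∧ |g| ≤ P.dψ i (α i) - P.dψ i 0) ∨
      (CK ≤ 1 ∧ 0 < CK ∧ |g| < CK * (P.dψ i (α i) - P.dψ i 0))) → 0 < t →
      z ∈ subdiffH C (P.dψ i) (α i) t →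
      (P.dψ i t - z - g - CK * (P.dψ i t - P.dψ i 0)) < 0 := by
    intro g t z H ht hz
    have mt : t ∈ C := aux_nn hC ht.le
    have hg := neg_abs_le g
    have hm := aux_mono P i m0 mt ht
    rcases sub_pos_mem ht hz with ⟨h1, rfl⟩ | ⟨h1, rfl⟩
    · have := aux_mono_le P i mt ma h1
      rcases H with ⟨h1, h2⟩ | ⟨h1, h3, h2⟩ <;> nlinarith
    · have := aux_mono P i ma mt h1
      rcases H with ⟨h1, h2⟩ | ⟨h1, h3, h2⟩ <;> nlinarith
  rcases lt_or_gt_of_ne ht with h | h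
  · have hu := aux_neg hC mt h
    have := key (-g) (-t) (-z) (by simpa using H) (by linarith) (sub_neg_mem hu (P.hodd hu i) hz)
    rw [P.hodd hu, aux_d0 hu] at this
    rw [aux_d0 hu]
    nlinarith
  · have := key g t z H h hz
    nlinarith

lemma onc_pos {N : ℕ} {C : Set ℝ} (hC : C = Set.univ ∨ C = Set.Ici 0) (P : PsiSetting N C)
    (α : Fin N → ℝ) (i : Fin N) (ha : 0 < α i) (CK v : ℝ) (hCK : 0 < CK)
    (hv : α i < v)
    (H : 1 < CK ∨ (CK ≤ 1 ∧ P.dψ i (α i) - P.dψ i 0 + CK * P.dψ i 0 < CK * P.dψ i v))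
    {t z : ℝ} (mt : t ∈ C) (ht : t ≠ v) (hz : z ∈ subdiffH C (P.dψ i) (α i) t) :
    (P.dψ i t - z - CK * (P.dψ i t - P.dψ i v)) * (t - v) < 0 := by
  have m0 : (0:ℝ) ∈ C := aux_nn hC le_rfl
  have ma : α i ∈ C := aux_nn hC ha.le
  have mv : v ∈ C := aux_nn hC (ha.trans hv).le
  have hav := aux_mono P i ma mv hv
  have hcav := mul_pos hCK (sub_pos.2 hav)
  have ha0 := aux_mono P i m0 ma ha
  have hbig : z = P.dψ i t → (P.dψ i t - z - CK * (P.dψ i t - P.dψ i v)) * (t - v) < 0 := by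
    rintro rfl
    rcases lt_or_gt_of_ne ht with h | h
    · have := mul_pos hCK (mul_pos (sub_pos.2 (aux_mono P i mt mv h)) (sub_pos.2 h))
      nlinarith
    · have := mul_pos hCK (mul_pos (sub_pos.2 (aux_mono P i mv mt h)) (sub_pos.2 h))
      nlinarith
  have hsm : t ≤ α i → 0 ≤ t → z ≤ P.dψ i (α i) →
      (P.dψ i t - z - CK * (P.dψ i t - P.dψ i v)) * (t - v) < 0 := by
    intro h1 h0 hz
    apply mul_neg_of_pos_of_neg _ (by linarith)
    have e1 := aux_mono_le P i mt ma h1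
    have e2 := aux_mono_le P i m0 mt h0
    rcases H with h | ⟨h, h'⟩
    · nlinarith
    · nlinarith
  rcases lt_trichotomy t 0 with h | h | h
  · have hu := aux_neg hC mt h
    rcases sub_pos_mem (by linarith) (sub_neg_mem hu (P.hodd hu i) hz) with ⟨h1, h2⟩ | ⟨h1, h2⟩
    · apply mul_neg_of_pos_of_neg _ (by linarith)
      have hz' : z = - P.dψ i (α i) := by linarith
      subst hz'
      have e1 := aux_mono_le P i (by simp [hu]) ma h1
      have e2 := aux_mono P i mt m0 h
      rw [P.hodd hu] at e1
      rw [aux_d0 hu] at *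
      rcases H with h | ⟨h, h'⟩ <;> nlinarith
    · rw [P.hodd hu] at h2
      exact hbig (by linarith)
  · subst h
    exact hsm ha.le le_rfl (sub_zero_mem ha hz)
  · rcases sub_pos_mem h hz with ⟨h1, h2⟩ | ⟨h1, h2⟩
    · exact hsm h1 h.le h2.le
    · exact hbig h2

lemma onc_all {N : ℕ} {C : Set ℝ} (hC : C = Set.univ ∨ C = Set.Ici 0) (P : PsiSetting N C)
    (α : Fin N → ℝ) (i : Fin N) (ha : 0 < α i) (CK v : ℝ) (hCK : 0 < CK)
    (mv : v ∈ C)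
    (H : (1 < CK ∧ v ∉ Set.Icc (-(α i)) (α i)) ∨ (CK ≤ 1 ∧ P.dψ i v ∉
      Set.Icc (-((P.dψ i (α i) - P.dψ i 0) / CK + P.dψ i 0))
        ((P.dψ i (α i) - P.dψ i 0) / CK + P.dψ i 0)))
    {t z : ℝ} (mt : t ∈ C) (ht : t ≠ v) (hz : z ∈ subdiffH C (P.dψ i) (α i) t) :
    (P.dψ i t - z - CK * (P.dψ i t - P.dψ i v)) * (t - v) < 0 := by
  rcases le_or_gt 0 v with h | h
  · obtain ⟨h1, h2⟩ := on_reduce hC P α i ha CK v hCK H h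
    exact onc_pos hC P α i ha CK v hCK h1 h2 mt ht hz
  · have hu := aux_neg hC mv h
    obtain ⟨h1, h2⟩ := on_reduce hC P α i ha CK (-v) hCK (H_neg hu P α i CK v H) (by linarith)
    have := onc_pos hC P α i ha CK (-v) hCK h1 h2 (t := -t) (by simp [hu])
      (fun h => ht (by linarith)) (sub_neg_mem hu (P.hodd hu i) hz)
    rw [P.hodd hu, P.hodd hu] at this
    nlinarith

lemma F_line {M N : ℕ} (S : FidSetting M N) (x d : Fin N → ℝ) (s : ℝ) (h : x + s • d ∈ S.feas) :
    HasDerivAt (fun s : ℝ => S.F (x + s • d)) (dotp (S.gradF (x + s • d)) d) s := by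
  have key : ∀ j, HasDerivAt (fun s : ℝ => S.g j (S.A.mulVec (x + s • d) j))
      (S.dg j (S.A.mulVec (x + s • d) j) * S.A.mulVec d j) s := by
    intro j
    have h1 := S.hg_deriv j _ (S.hdom _ h j)
    have h2 : HasDerivAt (fun s : ℝ => S.A.mulVec (x + s • d) j) (S.A.mulVec d j) s := by
      have : (fun s : ℝ => S.A.mulVec (x + s • d) j)
          = fun s : ℝ => S.A.mulVec x j + s * S.A.mulVec d j := by
        funext s
        simp [Matrix.mulVec_add, Matrix.mulVec_smul]
      rw [this]
      simpa using ((hasDerivAt_id s).mul_const (S.A.mulVec d j)).const_add (S.A.mulVec x j)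
    exact h1.comp s h2
  have h3 := HasDerivAt.fun_sum (u := Finset.univ) (fun j _ => key j)
  have h4 : dotp (S.gradF (x + s • d)) d
      = ∑ j, S.dg j (S.A.mulVec (x + s • d) j) * S.A.mulVec d j := by
    unfold dotp FidSetting.gradF
    generalize S.A.mulVec (x + s • d) = w
    simp only [Finset.sum_mul, Matrix.mulVec, dotProduct, Finset.mul_sum]
    rw [Finset.sum_comm]
    refine Finset.sum_congr rfl fun j _ => Finset.sum_congr rfl fun i _ => ?_
    ring
  rw [h4]
  exact h3

lemma feas_convex {C : Set ℝ} (hC : C = Set.univ ∨ C = Set.Ici 0) : Convex ℝ C := by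
  rcases hC with h | h
  · rw [h]; exact convex_univ
  · rw [h]; exact convex_Ici 0

lemma norm0_smul_le {ι : Type*} [Fintype ι] (s : ℝ) (x : ι → ℝ) : norm0 (s • x) ≤ norm0 x := by
  unfold norm0
  apply Finset.card_le_card
  intro i
  simp

lemma norm0_neg' {ι : Type*} [Fintype ι] (x : ι → ℝ) : norm0 (-x) = norm0 x := by
  unfold norm0
  simp

lemma breg_ineq {M N : ℕ} (S : FidSetting M N) (P : PsiSetting N S.𝒞)
    (X : Set (Fin N → ℝ)) (hX : X ⊆ S.feas) (K : ℕ) (CK : ℝ) (hB : BRSCholds S P X K CK)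
    (x x' : Fin N → ℝ) (hx : x ∈ X) (hx' : x' ∈ S.feas) (hK : norm0 (x' - x) ≤ K) (hne : x ≠ x') :
    S.F x + ∑ i, (S.gradF x i * (x' i - x i)
      + CK * (P.ψ i (x' i) - P.ψ i (x i) - P.dψ i (x i) * (x' i - x i))) ≤ S.F x' := by
  set d := x' - x with hd
  have hfe : ∀ s ∈ Set.Icc (0:ℝ) 1, x + s • d ∈ S.feas := by
    intro s hs i
    have := (feas_convex S.h𝒞).add_smul_sub_mem (hX hx i) (hx' i) hs
    simpa [hd] using this
  let c : ℝ := dotp (S.gradF x) d - CK * dotp (P.gradPsi x) d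
  let f : ℝ → ℝ := fun s => S.F (x + s • d) - CK * ∑ i, P.ψ i ((x + s • d) i) - s * c
  let f' : ℝ → ℝ := fun s => dotp (S.gradF (x + s • d)) d
    - CK * dotp (P.gradPsi (x + s • d)) d - c
  have hder : ∀ s ∈ Set.Icc (0:ℝ) 1, HasDerivWithinAt f (f' s) (Set.Icc 0 1) s := by
    intro s hs
    have h1 := (F_line S x d s (hfe s hs)).hasDerivWithinAt (s := Set.Icc (0:ℝ) 1)
    have h2 : HasDerivWithinAt (fun s : ℝ => ∑ i, P.ψ i ((x + s • d) i))
        (∑ i, P.dψ i ((x + s • d) i) * d i) (Set.Icc 0 1) s := by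
      apply HasDerivWithinAt.fun_sum
      intro i _
      have h3 : HasDerivWithinAt (fun s : ℝ => (x + s • d) i) (d i) (Set.Icc 0 1) s := by
        have := ((hasDerivAt_id s).mul_const (d i)).const_add (x i)
        simpa using this.hasDerivWithinAt (s := Set.Icc (0:ℝ) 1)
      exact (P.hderiv i _ (hfe s hs i)).comp s h3 (fun r hr => hfe r hr i)
    have h4 := (h1.sub (h2.const_mul CK)).sub
      (((hasDerivAt_id s).mul_const c).hasDerivWithinAt (s := Set.Icc (0:ℝ) 1))
    simp only [one_mul] at h4
    exact h4
  have hmono : MonotoneOn f (Set.Icc 0 1) := by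
    apply monotoneOn_of_hasDerivWithinAt_nonneg (convex_Icc 0 1) (f' := f')
    · exact fun s hs => (hder s hs).continuousWithinAt
    · intro s hs
      exact (hder s (interior_subset hs)).mono interior_subset
    · intro s hs
      rw [interior_Icc] at hs
      have hxx : x - (x + s • d) = (-s) • d := by simp
      have hsd : x ≠ x + s • d := by
        intro h
        have : s • d = 0 := by simpa using h.symm
        rcases smul_eq_zero.mp this with h | h
        · linarith [hs.1]
        · exact hne (by rw [hd] at h; exact (sub_eq_zero.mp h).symm)
      have hb := hB x hx (x + s • d) (hfe s ⟨hs.1.le, hs.2.le⟩) hsd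
        (by rw [hxx]; exact (norm0_smul_le _ _).trans hK)
      rw [hxx] at hb
      have e : ∀ u v : Fin N → ℝ, dotp (u - v) ((-s) • d) = s * (dotp v d - dotp u d) := by
        intro u v
        unfold dotp
        rw [← Finset.sum_sub_distrib, Finset.mul_sum]
        refine Finset.sum_congr rfl fun i _ => ?_
        simp; ring
      rw [e, e] at hb
      have : 0 ≤ s * f' s := by
        simp only [f', c]; linarith
      exact nonneg_of_mul_nonneg_right this hs.1
  have h01 := hmono (by simp) (by simp) (zero_le_one' ℝ)
  have hx1 : x + d = x' := by simp [hd]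
  simp only [f, c, zero_smul, add_zero, one_smul, hx1, zero_mul, one_mul, sub_zero] at h01
  have e2 : ∑ i, (S.gradF x i * (x' i - x i)
      + CK * (P.ψ i (x' i) - P.ψ i (x i) - P.dψ i (x i) * (x' i - x i)))
      = dotp (S.gradF x) d + CK * (∑ i, P.ψ i (x' i) - ∑ i, P.ψ i (x i) - dotp (P.gradPsi x) d) := by
    unfold dotp PsiSetting.gradPsi
    rw [← Finset.sum_sub_distrib, ← Finset.sum_sub_distrib, Finset.mul_sum,
      ← Finset.sum_add_distrib]
    simp [hd]
  rw [e2]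
  linarith

lemma sc_endpoint {f : ℝ → ℝ} {a b t : ℝ} (hf : StrictConcaveOn ℝ (Set.Ioo a b) f)
    (hc : ContinuousOn f (Set.Icc a b)) (ht : t ∈ Set.Ioo a b) : f a < f t ∨ f b < f t := by
  have hint : ∀ s ∈ Set.Ioo a b, ¬ ∀ r ∈ Set.Icc a b, f s ≤ f r := by
    intro s hs hmin
    let e := min (s - a) (b - s) / 2
    have he : 0 < e := by
      have : 0 < min (s - a) (b - s) := lt_min (by linarith [hs.1]) (by linarith [hs.2])
      positivity
    have e1 : 2 * e ≤ s - a := by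
      have := min_le_left (s - a) (b - s); simp only [e]; linarith
    have e2 : 2 * e ≤ b - s := by
      have := min_le_right (s - a) (b - s); simp only [e]; linarith
    have m1 : s - e ∈ Set.Ioo a b := ⟨by linarith, by linarith⟩
    have m2 : s + e ∈ Set.Ioo a b := ⟨by linarith, by linarith⟩
    have := hf.2 m1 m2 (by intro h; linarith) (show (0:ℝ) < 1/2 by norm_num)
      (show (0:ℝ) < 1/2 by norm_num) (by norm_num)
    simp only [smul_eq_mul] at this
    rw [show 1/2 * (s - e) + 1/2 * (s + e) = s by ring] at this
    have n1 := hmin _ (Set.Ioo_subset_Icc_self m1)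
    have n2 := hmin _ (Set.Ioo_subset_Icc_self m2)
    linarith
  obtain ⟨s, hs, hmin⟩ := isCompact_Icc.exists_isMinOn ⟨t, Set.Ioo_subset_Icc_self ht⟩ hc
  have hmin' : ∀ r ∈ Set.Icc a b, f s ≤ f r := fun r hr => hmin hr
  have hlt : f s < f t := by
    by_contra hcon
    exact hint t ht fun r hr => (not_lt.mp hcon).trans (hmin' r hr)
  rcases hs.1.eq_or_lt with h | h
  · left; rw [h]; exact hlt
  · rcases hs.2.eq_or_lt with h' | h'
    · right; rw [← h']; exact hlt
    · exact absurd hmin' (hint s ⟨h, h'⟩)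

lemma beta_zero {N : ℕ} {C : Set ℝ} (P : PsiSetting N C) (α : Fin N → ℝ) (l : ℝ) (i : Fin N)
    (ha : 0 < α i) : betaPen P α l i 0 = 0 := by
  rw [beta_pos P α l i le_rfl ha.le]; simp

lemma beta_ge {N : ℕ} {C : Set ℝ} (hC : C = Set.univ ∨ C = Set.Ici 0) (P : PsiSetting N C)
    (α : Fin N → ℝ) (l : ℝ) (i : Fin N)
    (hα : 0 < α i ∧ dBreg (P.ψ i) (P.dψ i) 0 (α i) = l) {t : ℝ} (mt : t ∈ C) (ht : α i ≤ |t|) :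
    betaPen P α l i t = l := by
  rcases ht.lt_or_eq with h | h
  · exact beta_big P α l i h
  · have key : betaPen P α l i (α i) = l := by
      rw [beta_pos P α l i hα.1.le le_rfl, ← hα.2]
      unfold dBreg; ring
    rcases le_or_gt 0 t with h0 | h0
    · rw [abs_of_nonneg h0] at h; rw [← h]; exact key
    · rw [abs_of_neg h0] at h
      rw [← beta_neg (aux_neg hC mt h0), ← h]; exact key

lemma beta_le {N : ℕ} {C : Set ℝ} (hC : C = Set.univ ∨ C = Set.Ici 0) (P : PsiSetting N C)
    (α : Fin N → ℝ) (l : ℝ) (i : Fin N)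
    (hα : 0 < α i ∧ dBreg (P.ψ i) (P.dψ i) 0 (α i) = l) {t : ℝ} (mt : t ∈ C) :
    betaPen P α l i t ≤ l := by
  have key : ∀ t, 0 ≤ t → t ≤ α i → betaPen P α l i t ≤ l := by
    intro t h0 h1
    rw [beta_pos P α l i h0 h1, ← hα.2]
    unfold dBreg
    have := aux_grad_le P i (aux_nn hC h0) (aux_nn hC hα.1.le)
    linarith
  rcases lt_or_ge (α i) |t| with h | h
  · exact (beta_big P α l i h).le
  · rcases le_or_gt 0 t with h0 | h0
    · exact key t h0 ((le_abs_self t).trans h)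
    · rw [← beta_neg (aux_neg hC mt h0)]
      exact key (-t) (by linarith) ((neg_le_abs t).trans h)

lemma l0_sum {N : ℕ} (l : ℝ) (x : Fin N → ℝ) :
    l * (norm0 x : ℝ) = ∑ i, if x i = 0 then 0 else l := by
  unfold norm0
  rw [Finset.card_filter]
  push_cast
  rw [Finset.mul_sum]
  refine Finset.sum_congr rfl fun i _ => ?_
  by_cases h : x i = 0 <;> simp [h]

lemma J_le {M N : ℕ} (S : FidSetting M N) (P : PsiSetting N S.𝒞) (α : Fin N → ℝ) (l : ℝ)
    (hα : ∀ i, 0 < α i ∧ dBreg (P.ψ i) (P.dψ i) 0 (α i) = l) {x : Fin N → ℝ} (hx : x ∈ S.feas) :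
    JPsi S P α l x ≤ J0 S l x := by
  unfold JPsi J0
  rw [l0_sum]
  gcongr with i
  split_ifs with h
  · rw [h, beta_zero P α l i (hα i).1]
  · exact beta_le S.h𝒞 P α l i (hα i) (hx i)

lemma J_eq {M N : ℕ} (S : FidSetting M N) (P : PsiSetting N S.𝒞) (α : Fin N → ℝ) (l : ℝ)
    (hα : ∀ i, 0 < α i ∧ dBreg (P.ψ i) (P.dψ i) 0 (α i) = l) {x : Fin N → ℝ} (hx : x ∈ S.feas)
    (hg : ∀ i, x i = 0 ∨ α i ≤ |x i|) :
    JPsi S P α l x = J0 S l x := by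
  unfold JPsi J0
  rw [l0_sum]
  congr 1
  refine Finset.sum_congr rfl fun i _ => ?_
  split_ifs with h
  · rw [h, beta_zero P α l i (hα i).1]
  · exact beta_ge S.h𝒞 P α l i (hα i) (hx i) ((hg i).resolve_left h)

lemma upd_feas {M N : ℕ} (S : FidSetting M N) {x : Fin N → ℝ} (hx : x ∈ S.feas) (i : Fin N)
    {t : ℝ} (ht : t ∈ S.𝒞) : Function.update x i t ∈ S.feas := by
  intro k
  by_cases h : k = i
  · subst h; simpa using ht
  · simpa [h] using hx k

lemma upd_eq {N : ℕ} (x : Fin N → ℝ) (i : Fin N) (t : ℝ) :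
    Function.update x i t = Function.update x i 0 + t • Pi.single i (1:ℝ) := by
  ext k
  by_cases h : k = i
  · subst h; simp
  · simp [h]

lemma F_upd {M N : ℕ} (S : FidSetting M N) {x : Fin N → ℝ} (hx : x ∈ S.feas) (i : Fin N)
    {t : ℝ} (ht : t ∈ S.𝒞) :
    HasDerivAt (fun s => S.F (Function.update x i s)) (S.gradF (Function.update x i t) i) t := by
  have h := F_line S (Function.update x i 0) (Pi.single i 1) t
    (by rw [← upd_eq]; exact upd_feas S hx i ht)
  simp only [← upd_eq] at h
  convert h using 1
  unfold dotp
  simp [Pi.single_apply]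

lemma J_cont {M N : ℕ} (S : FidSetting M N) (P : PsiSetting N S.𝒞) (α : Fin N → ℝ) (l : ℝ)
    {x : Fin N → ℝ} (hx : x ∈ S.feas) (i : Fin N) (D : Set ℝ) (hD : D ⊆ S.𝒞)
    (hb : ContinuousOn (betaPen P α l i) D) :
    ContinuousOn (fun s => JPsi S P α l (Function.update x i s)) D := by
  unfold JPsi
  apply ContinuousOn.add
  · exact fun s hs => (F_upd S hx i (hD hs)).continuousAt.continuousWithinAt
  · apply continuousOn_finsetSum
    intro k _
    by_cases h : k = i
    · subst h; simpa using hb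
    · simpa [h] using continuousOn_const

lemma beta_cont {N : ℕ} {C : Set ℝ} (hC : C = Set.univ ∨ C = Set.Ici 0) (P : PsiSetting N C)
    (α : Fin N → ℝ) (l : ℝ) (i : Fin N) :
    ContinuousOn (betaPen P α l i) (Set.Icc 0 (α i)) := by
  have h1 : ContinuousOn (P.ψ i) (Set.Icc 0 (α i)) := fun t ht =>
    (P.hderiv i t (aux_nn hC ht.1)).continuousWithinAt.mono fun r hr => aux_nn hC hr.1
  have h2 : ContinuousOn (fun t => P.ψ i 0 - P.ψ i t + P.dψ i (α i) * t) (Set.Icc 0 (α i)) := by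
    fun_prop
  exact h2.congr fun t ht => beta_pos P α l i ht.1 ht.2

lemma J_dec {M N : ℕ} (S : FidSetting M N) (P : PsiSetting N S.𝒞) (α : Fin N → ℝ) (l : ℝ)
    (hα : ∀ i, 0 < α i) (hCC : CCond S P α l)
    {x : Fin N → ℝ} (hx : x ∈ S.feas) (i : Fin N) (h0 : x i ≠ 0) (h1 : |x i| < α i) :
    ∃ c ∈ S.𝒞, (c = 0 ∨ α i ≤ |c|) ∧ JPsi S P α l (Function.update x i c) < JPsi S P α l x := by
  obtain ⟨hn, hp⟩ := hCC x hx i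
  rcases lt_or_gt_of_ne h0 with h | h
  · have hu := aux_neg S.h𝒞 (hx i) h
    have hc : ContinuousOn (betaPen P α l i) (Set.Icc (-(α i)) 0) := by
      have := (beta_cont S.h𝒞 P α l i).comp (s := Set.Icc (-(α i)) 0) (f := fun t => -t)
        (by fun_prop) (fun t ht => ⟨by linarith [ht.2], by linarith [ht.1]⟩)
      exact this.congr fun t _ => (beta_neg hu P α l i t).symm
    have := sc_endpoint hn (J_cont S P α l hx i _ (by rw [hu]; exact Set.subset_univ _) hc)
      (t := x i) ⟨by linarith [neg_abs_le (x i)], h⟩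
    simp only [Function.update_eq_self] at this
    rcases this with h | h
    · exact ⟨_, by simp [hu], Or.inr (by rw [abs_neg]; exact le_abs_self _), h⟩
    · exact ⟨_, by simp [hu], Or.inl rfl, h⟩
  · have := sc_endpoint hp (J_cont S P α l hx i _ (fun t ht => aux_nn S.h𝒞 ht.1)
      (beta_cont S.h𝒞 P α l i)) (t := x i) ⟨h, by linarith [le_abs_self (x i)]⟩
    simp only [Function.update_eq_self] at this
    rcases this with h | h
    · exact ⟨_, aux_nn S.h𝒞 le_rfl, Or.inl rfl, h⟩
    · exact ⟨_, aux_nn S.h𝒞 (hα i).le, Or.inr (le_abs_self _), h⟩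

/-- reduction to good points -/
lemma J_red {M N : ℕ} (S : FidSetting M N) (P : PsiSetting N S.𝒞) (α : Fin N → ℝ) (l : ℝ)
    (hα : ∀ i, 0 < α i) (hCC : CCond S P α l) (x0 : Fin N → ℝ)
    (hgood : ∀ x ∈ S.feas, (∀ i, x i = 0 ∨ α i ≤ |x i|) → x ≠ x0 →
      JPsi S P α l x0 < JPsi S P α l x) (n : ℕ) :
    ∀ x ∈ S.feas, (Finset.univ.filter fun i => x i ≠ 0 ∧ |x i| < α i).card = n → x ≠ x0 →
      JPsi S P α l x0 < JPsi S P α l x := by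
  induction n with
  | zero =>
    intro x hx hn hne
    apply hgood x hx _ hne
    intro i
    by_contra hc
    push Not at hc
    rw [Finset.card_eq_zero] at hn
    have : i ∈ (Finset.univ.filter fun i => x i ≠ 0 ∧ |x i| < α i) := by simpa using hc
    rw [hn] at this
    simp at this
  | succ n ih =>
    intro x hx hn hne
    have hpos : 0 < (Finset.univ.filter fun i => x i ≠ 0 ∧ |x i| < α i).card := by omega
    obtain ⟨i, hi⟩ := Finset.card_pos.mp hpos
    have hi' := hi
    simp only [Finset.mem_filter, Finset.mem_univ, true_and] at hi'
    obtain ⟨c, hc, hc2, hlt⟩ := J_dec S P α l hα hCC hx i hi'.1 hi'.2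
    have hf := upd_feas S hx i hc
    have hcard : (Finset.univ.filter fun k => Function.update x i c k ≠ 0 ∧
        |Function.update x i c k| < α k) =
        (Finset.univ.filter fun i => x i ≠ 0 ∧ |x i| < α i).erase i := by
      ext k
      by_cases h : k = i
      · subst h
        simp
        intro h1
        exact hc2.resolve_left h1
      · simp [h]
    by_cases he : Function.update x i c = x0
    · rw [he] at hlt; exact hlt
    · refine (ih _ hf ?_ he).trans hlt
      rw [hcard, Finset.card_erase_of_mem hi, hn]; rfl

lemma zpad_upd {N : ℕ} (σ : Finset (Fin N)) (u : {i // i ∈ σ} → ℝ) (i : {i // i ∈ σ}) (t : ℝ) :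
    Function.update (zpad σ u) i.1 t = zpad σ (Function.update u i t) := by
  ext k
  unfold zpad
  by_cases h : k = i.1
  · subst h; simp
  · by_cases hk : k ∈ σ
    · have : (⟨k, hk⟩ : {i // i ∈ σ}) ≠ i := fun hh => h (by rw [← hh])
      simp [h, hk, Function.update_of_ne this]
    · simp [h, hk]

/-- Theorem 4.8: sufficient conditions for the oracle solution to be the
unique global minimizer of `J_Ψ` (and of `J₀`), isolated in terms of sparsity. -/
theorem stmt15 {M N : ℕ} (S : FidSetting M N) (P : PsiSetting N S.𝒞)
    (lam0 : ℝ) (hlam0 : 0 < lam0) (α : Fin N → ℝ)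
    (hα : ∀ i, 0 < α i ∧ dBreg (P.ψ i) (P.dψ i) 0 (α i) = lam0)
    -- the oracle setting: `x*`, its support, full column rank of `A_{σ*}`,
    -- and the oracle solution `u^or` (the unique minimizer of `F_{σ*}` over `𝒞^{k*}`)
    (xstar : Fin N → ℝ) (hxstar : xstar ∈ S.feas) (hσne : (suppF xstar).Nonempty)
    (hrank : LinearIndependent ℝ fun i : {i // i ∈ suppF xstar} => fun j : Fin M => S.A j i.1)
    (uor : {i // i ∈ suppF xstar} → ℝ)
    (huor_feas : ∀ j, uor j ∈ S.𝒞)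
    (huor_min : ∀ u : {i // i ∈ suppF xstar} → ℝ, (∀ j, u j ∈ S.𝒞) →
      Fres S (suppF xstar) uor ≤ Fres S (suppF xstar) u)
    (huor_uniq : ∀ u : {i // i ∈ suppF xstar} → ℝ, (∀ j, u j ∈ S.𝒞) →
      Fres S (suppF xstar) u ≤ Fres S (suppF xstar) uor → u = uor)
    -- BRSC w.r.t. `Ψ`, a compact convex `X` containing `x^or` and `x*`, and `K ≥ 2k*`
    (X : Set (Fin N → ℝ)) (hXfeas : X ⊆ S.feas) (hXcomp : IsCompact X) (hXconv : Convex ℝ X)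
    (hXor : zpad (suppF xstar) uor ∈ X) (hXstar : xstar ∈ X)
    (K : ℕ) (hK : 2 * (suppF xstar).card ≤ K) (CK : ℝ) (hCK : 0 < CK)
    (hBRSC : BRSCholds S P X K CK)
    (hCC : CCond S P α lam0)
    (Ltil : ℝ) (hLtil : 0 < Ltil)
    (hdesc : ∀ x ∈ S.feas,
      enorm2 (fun j => S.dg j (S.A.mulVec x j)) ≤ Real.sqrt (2 * Ltil * S.F x))
    (Sreg : Set ({i // i ∈ suppF xstar} → ℝ)) (hSsub : ∀ u ∈ Sreg, ∀ j, u j ∈ S.𝒞)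
    (hSor : uor ∈ Sreg)
    -- case (a) `C_K > 1` with `S ∩ Ω = ∅`, or case (b) `C_K ≤ 1` with `S ∩ Ω̃ = ∅`
    (hcases :
      (1 < CK ∧
        Sreg ∩ {u | ∃ j, u j ∈ Set.Icc (-(α j.1)) (α j.1)} = ∅ ∧
        ∀ i, i ∉ suppF xstar →
          enorm2 (fun j => S.A j i) * Real.sqrt (2 * Ltil * S.F xstar)
            ≤ P.dψ i (α i) - P.dψ i 0) ∨
      (CK ≤ 1 ∧
        Sreg ∩ {u | ∃ j, P.dψ j.1 (u j) ∈
          Set.Icc (-((P.dψ j.1 (α j.1) - P.dψ j.1 0) / CK + P.dψ j.1 0))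
                  ((P.dψ j.1 (α j.1) - P.dψ j.1 0) / CK + P.dψ j.1 0)} = ∅ ∧
        ∀ i, i ∉ suppF xstar →
          enorm2 (fun j => S.A j i) * Real.sqrt (2 * Ltil * S.F xstar)
            < CK * (P.dψ i (α i) - P.dψ i 0)))
    -- `λ₀ > F(x*)/(1 + K - 2k*)`
    (hlambig : S.F xstar / (1 + (K : ℝ) - 2 * ((suppF xstar).card : ℝ)) < lam0) :
    (∀ x' ∈ S.feas, x' ≠ zpad (suppF xstar) uor →
      JPsi S P α lam0 (zpad (suppF xstar) uor) < JPsi S P α lam0 x') ∧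
    (∀ x' ∈ S.feas, x' ≠ zpad (suppF xstar) uor →
      J0 S lam0 (zpad (suppF xstar) uor) < J0 S lam0 x') ∧
    suppF (zpad (suppF xstar) uor) = suppF xstar ∧
    (∀ x' : Fin N → ℝ, IsCritical S P α x' → x' ≠ zpad (suppF xstar) uor →
      K < norm0 (x' - zpad (suppF xstar) uor)) := by
  obtain ⟨σ, hσ⟩ : ∃ σ, σ = suppF xstar := ⟨_, rfl⟩
  rw [← hσ] at hσne hrank hK hlambig
  have hC := S.h𝒞
  have hmemσ : ∀ i, i ∈ suppF xstar ↔ xstar i ≠ 0 := by intro i; simp [suppF]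
  set xor := zpad (suppF xstar) uor with hxor
  have hxor_in : ∀ j : {i // i ∈ suppF xstar}, xor j.1 = uor j := by
    intro j; simp [hxor, zpad]
  have hxor_out : ∀ i, i ∉ suppF xstar → xor i = 0 := by
    intro i hi; simp only [hxor, zpad, dif_neg hi]
  have hor_feas : xor ∈ S.feas := hXfeas hXor
  -- data on the support
  have Hon : ∀ i ∈ suppF xstar, (1 < CK ∧ xor i ∉ Set.Icc (-(α i)) (α i)) ∨
      (CK ≤ 1 ∧ P.dψ i (xor i) ∉
      Set.Icc (-((P.dψ i (α i) - P.dψ i 0) / CK + P.dψ i 0))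
        ((P.dψ i (α i) - P.dψ i 0) / CK + P.dψ i 0)) := by
    intro i hi
    have e := hxor_in ⟨i, hi⟩
    simp only at e
    rw [e]
    rcases hcases with ⟨h1, h2, -⟩ | ⟨h1, h2, -⟩
    · left
      refine ⟨h1, fun h => ?_⟩
      have : uor ∈ (∅ : Set ({i // i ∈ suppF xstar} → ℝ)) := h2 ▸ ⟨hSor, ⟨i, hi⟩, h⟩
      exact this
    · right
      refine ⟨h1, fun h => ?_⟩
      have : uor ∈ (∅ : Set ({i // i ∈ suppF xstar} → ℝ)) := h2 ▸ ⟨hSor, ⟨i, hi⟩, h⟩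
      exact this
  have habs : ∀ i ∈ suppF xstar, α i < |xor i| := fun i hi =>
    on_abs hC P α i (hα i).1 CK _ hCK (hor_feas i) (Hon i hi)
  have hne0 : ∀ i ∈ suppF xstar, xor i ≠ 0 := by
    intro i hi h0
    have := habs i hi
    rw [h0, abs_zero] at this
    linarith [(hα i).1]
  have hsupp : suppF xor = suppF xstar := by
    ext i
    constructor
    · intro h
      by_contra hc
      exact (by simpa [suppF] using h : xor i ≠ 0) (hxor_out i hc)
    · intro h
      simpa [suppF] using hne0 i h
  have hnorm : norm0 xor = (suppF xstar).card := by rw [← hsupp]; rfl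
  -- gradient vanishes on the support
  have hgrad0 : ∀ i ∈ suppF xstar, S.gradF xor i = 0 := by
    intro i hi
    have hd := F_upd S hor_feas i (hor_feas i)
    rw [Function.update_eq_self] at hd
    apply IsLocalMin.hasDerivAt_eq_zero _ hd
    have hnb : S.𝒞 ∈ nhds (xor i) := by
      rcases hC with h | h
      · rw [h]; exact Filter.univ_mem
      · rw [h]
        apply Ici_mem_nhds
        have h1 := hor_feas i
        rw [h] at h1
        exact lt_of_le_of_ne h1 (hne0 i hi).symm
    filter_upwards [hnb] with t ht
    rw [Function.update_eq_self, zpad_upd (suppF xstar) uor ⟨i, hi⟩ t]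
    refine huor_min _ fun j => ?_
    by_cases h : j = ⟨i, hi⟩
    · subst h; simpa using ht
    · rw [Function.update_of_ne h]; exact huor_feas j
  have hFle : S.F xor ≤ S.F xstar := by
    have := huor_min (fun j => xstar j.1) (fun j => hxstar j.1)
    unfold Fres at this
    have e : zpad (suppF xstar) (fun j => xstar j.1) = xstar := by
      ext i
      unfold zpad
      split_ifs with h
      · rfl
      · rw [hmemσ] at h; push Not at h; exact h.symm
    rwa [e] at this
  have hFnn : ∀ x ∈ S.feas, 0 ≤ S.F x := fun x hx =>
    Finset.sum_nonneg fun j _ => S.hg_nonneg j _ (interior_subset (S.hdom x hx j))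
  have hgradb : ∀ i, |S.gradF xor i| ≤
      enorm2 (fun j => S.A j i) * Real.sqrt (2 * Ltil * S.F xstar) := by
    intro i
    have h1 : ∀ f g : Fin M → ℝ, |∑ j, f j * g j| ≤ enorm2 f * enorm2 g := by
      intro f g
      rw [abs_le]
      constructor
      · have := Real.sum_mul_le_sqrt_mul_sqrt Finset.univ (fun j => - f j) g
        simp only [neg_mul, Finset.sum_neg_distrib, neg_sq] at this
        unfold enorm2 sqnorm
        linarith
      · exact Real.sum_mul_le_sqrt_mul_sqrt Finset.univ f g
    refine (h1 _ _).trans ?_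
    apply mul_le_mul_of_nonneg_left _ (Real.sqrt_nonneg _)
    refine (hdesc xor hor_feas).trans (Real.sqrt_le_sqrt ?_)
    exact mul_le_mul_of_nonneg_left hFle (by linarith)
  have Hoff : ∀ i, i ∉ suppF xstar →
      (1 < CK ∧ |S.gradF xor i| ≤ P.dψ i (α i) - P.dψ i 0) ∨
      (CK ≤ 1 ∧ 0 < CK ∧ |S.gradF xor i| < CK * (P.dψ i (α i) - P.dψ i 0)) := by
    intro i hi
    rcases hcases with ⟨h1, -, h3⟩ | ⟨h1, -, h3⟩
    · exact Or.inl ⟨h1, (hgradb i).trans (h3 i hi)⟩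
    · exact Or.inr ⟨h1, hCK, (hgradb i).trans_lt (h3 i hi)⟩
  have hor_good : ∀ i, xor i = 0 ∨ α i ≤ |xor i| := by
    intro i
    by_cases h : i ∈ suppF xstar
    · exact Or.inr (habs i h).le
    · exact Or.inl (hxor_out i h)
  have hJor : JPsi S P α lam0 xor = J0 S lam0 xor := J_eq S P α lam0 hα hor_feas hor_good
  -- near points
  have hnear : ∀ x ∈ S.feas, x ≠ xor → norm0 (x - xor) ≤ K →
      JPsi S P α lam0 xor < JPsi S P α lam0 x := by
    intro x hx hne hn
    have hb := breg_ineq S P X hXfeas K CK hBRSC xor x hXor hx hn hne.symm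
    have hsum : ∑ i, betaPen P α lam0 i (xor i) < ∑ i, ((S.gradF xor i * (x i - xor i)
      + CK * (P.ψ i (x i) - P.ψ i (xor i) - P.dψ i (xor i) * (x i - xor i)))
      + betaPen P α lam0 i (x i)) := by
      have hlt : ∀ i, x i ≠ xor i → betaPen P α lam0 i (xor i) < (S.gradF xor i * (x i - xor i)
        + CK * (P.ψ i (x i) - P.ψ i (xor i) - P.dψ i (xor i) * (x i - xor i)))
        + betaPen P α lam0 i (x i) := by
        intro i hi
        by_cases h : i ∈ suppF xstar
        · rw [hgrad0 i h, zero_mul, zero_add, beta_big P α lam0 i (habs i h)]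
          exact on_all hC P α lam0 i (hα i) CK _ hCK (hor_feas i) (Hon i h) (hx i) hi
        · rw [hxor_out i h] at hi ⊢
          rw [beta_zero P α lam0 i (hα i).1, sub_zero]
          exact off_all hC P α lam0 i hlam0 (hα i) CK _ (Hoff i h) (hx i) hi
      apply Finset.sum_lt_sum
      · intro i _
        by_cases hi : x i = xor i
        · rw [hi]; simp
        · exact (hlt i hi).le
      · obtain ⟨i, hi⟩ := Function.ne_iff.mp hne
        exact ⟨i, Finset.mem_univ i, hlt i hi⟩
    rw [Finset.sum_add_distrib] at hsum
    unfold JPsi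
    linarith
  -- far good points
  have hfar : ∀ x ∈ S.feas, K < norm0 (x - xor) → J0 S lam0 xor < J0 S lam0 x := by
    intro x hx hn
    have h1 : norm0 (x - xor) ≤ norm0 x + norm0 xor := by
      unfold norm0
      refine le_trans (Finset.card_le_card ?_) (Finset.card_union_le _ _)
      intro i
      simp only [Finset.mem_filter, Finset.mem_univ, true_and, Finset.mem_union, Pi.sub_apply]
      intro h
      by_contra hc
      push Not at hc
      exact h (by rw [hc.1, hc.2, sub_zero])
    rw [hnorm] at h1
    unfold J0
    rw [hnorm, ← hσ]
    rw [← hσ] at h1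
    have h2 : (K : ℝ) + 1 ≤ norm0 x + σ.card := by exact_mod_cast (by omega : K + 1 ≤ norm0 x + σ.card)
    have h3 : 2 * (σ.card : ℝ) ≤ K := by exact_mod_cast hK
    rw [div_lt_iff₀ (by linarith)] at hlambig
    have h4 := hFnn x hx
    have h5 := mul_le_mul_of_nonneg_left h2 hlam0.le
    nlinarith
  have hJ : ∀ x' ∈ S.feas, x' ≠ xor → JPsi S P α lam0 xor < JPsi S P α lam0 x' := by
    intro x hx hne
    refine J_red S P α lam0 (fun i => (hα i).1) hCC xor ?_ _ x hx rfl hne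
    intro y hy hg hyne
    rcases le_or_gt (norm0 (y - xor)) K with h | h
    · exact hnear y hy hyne h
    · rw [hJor, J_eq S P α lam0 hα hy hg]
      exact hfar y hy h
  refine ⟨hJ, ?_, hsupp, ?_⟩
  · intro x hx hne
    rw [← hJor]
    exact (hJ x hx hne).trans_le (J_le S P α lam0 hα hx)
  · intro x hcrit hne
    obtain ⟨hx, hz⟩ := hcrit
    by_contra hc
    push Not at hc
    have hb := hBRSC xor hXor x hx hne.symm (by
      rw [← norm0_neg', neg_sub]; exact hc)
    unfold dotp PsiSetting.gradPsi at hb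
    rw [Finset.mul_sum, ← sub_nonneg, ← Finset.sum_sub_distrib] at hb
    have hlt : ∀ i, x i ≠ xor i → (S.gradF xor - S.gradF x) i * (xor - x) i -
        CK * (((fun i => P.dψ i (xor i)) - fun i => P.dψ i (x i)) i * (xor - x) i) < 0 := by
      intro i hi
      have hzi := hz i
      have hzz : S.gradF x i = P.dψ i (x i) - zmap S P x i := by simp [zmap]
      simp only [Pi.sub_apply]
      rw [hzz]
      by_cases h : i ∈ suppF xstar
      · have := onc_all hC P α i (hα i).1 CK _ hCK (hor_feas i) (Hon i h) (hx i) hi hzi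
        rw [hgrad0 i h]
        nlinarith
      · rw [hxor_out i h] at hi ⊢
        have := offc_all hC P α i (hα i).1 CK _ (Hoff i h) (hx i) hi hzi
        nlinarith
    refine absurd hb (not_le.mpr ?_)
    apply Finset.sum_neg' 
    · intro i _
      by_cases hi : x i = xor i
      · simp [hi]
      · exact (hlt i hi).le
    · obtain ⟨i, hi⟩ := Function.ne_iff.mp hne
      exact ⟨i, Finset.mem_univ i, hlt i hi⟩
end
end

section
/- Let δ ∈ [0,1), m > 0, e ≥ 0, and λ₀ > 0 satisfy e²/(2(1−δ)²) < λ₀ < ((1−δ)²/(2(2−δ)²))·m². Then λ₀ < ((1−δ)²/2)·(m − e/√(1−δ))². In particular, the interval of regularization parameters from Carlsson–Gerosa (2020) is contained in the interval (‖ε‖₂²/(2(1−δ)²), ((1−δ)²/2)(min_{i∈σ*}|x*_i| − ‖ε‖₂/√(1−δ))²) derived in this paper, with m = min_{i∈σ*}|x*_i| and e = ‖ε‖₂. -/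
noncomputable section

/-- the interval of regularization parameters of Carlsson--Gerosa (2020) is
contained in the interval derived in the paper (with `m = min_{i∈σ*}|x*_i|`, `e = ‖ε‖₂`). -/
theorem stmt18 (δ m e lam0 : ℝ) (hδ0 : 0 ≤ δ) (hδ1 : δ < 1) (hm : 0 < m) (he : 0 ≤ e)
    (h1 : e ^ 2 / (2 * (1 - δ) ^ 2) < lam0)
    (h2 : lam0 < (1 - δ) ^ 2 / (2 * (2 - δ) ^ 2) * m ^ 2) :
    lam0 < (1 - δ) ^ 2 / 2 * (m - e / Real.sqrt (1 - δ)) ^ 2 := by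
  obtain ⟨a, rfl⟩ : ∃ a, δ = 1 - a := ⟨1 - δ, by ring⟩
  have e1 : 1 - (1 - a) = a := by ring
  have e2 : 2 - (1 - a) = 1 + a := by ring
  rw [e1] at h1 h2 ⊢
  rw [e2] at h2
  have ha : 0 < a := by linarith
  have ha1 : a ≤ 1 := by linarith
  have h3 : (e / a) ^ 2 < (a * m / (1 + a)) ^ 2 := by
    have h := h1.trans h2
    have l : e ^ 2 / (2 * a ^ 2) = (e / a) ^ 2 / 2 := by field_simp
    have r : a ^ 2 / (2 * (1 + a) ^ 2) * m ^ 2 = (a * m / (1 + a)) ^ 2 / 2 := by field_simp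
    rw [l, r] at h
    linarith
  have h4 : e / a < a * m / (1 + a) := lt_of_pow_lt_pow_left₀ 2 (by positivity) h3
  have hs : a ≤ Real.sqrt a := Real.le_sqrt_of_sq_le (by nlinarith)
  have h5 : e / Real.sqrt a ≤ e / a := div_le_div_of_nonneg_left he ha hs
  have h6 : m / (1 + a) = m - a * m / (1 + a) := by field_simp; ring
  have h7 : m / (1 + a) ≤ m - e / Real.sqrt a := by linarith
  have h8 : (m / (1 + a)) ^ 2 ≤ (m - e / Real.sqrt a) ^ 2 :=
    pow_le_pow_left₀ (by positivity) h7 2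
  have h9 : a ^ 2 / (2 * (1 + a) ^ 2) * m ^ 2 = a ^ 2 / 2 * (m / (1 + a)) ^ 2 := by field_simp
  rw [h9] at h2
  exact h2.trans_le (mul_le_mul_of_nonneg_left h8 (by positivity))
end
end
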